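/- Let (R, m) be a local ring, and suppose a and b are linked by I over M with every associated prime of M/IM minimal. Then M/IM is Artinian if and only if M/aM is Artinian, if and only if M/bM is Artinian; moreover, if these hold, then aM ∩ bM ≠ IM. -/

import Mathlib

open RingTheory.Sequence

/-- The colon submodule `N :_M a = {m ∈ M | a m ⊆ N}`. -/
def Submodule.colonBy {R M : Type*} [CommRing R] [AddCommGroup M] [Module R M]
    (N : Submodule R M) (a : Ideal R) : Submodule R M :=
  ⨅ r ∈ a, N.comap (LinearMap.lsmul R M r)
/-- `a` and `b` are linked by `I` over `M`: `I ⊆ a ∩ b` is generated by an `M`-regular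
sequence, `aM ≠ M ≠ bM`, `IM :_M a = bM` and `IM :_M b = aM`. -/
def Ideal.LinkedBy (R M : Type*) [CommRing R] [AddCommGroup M] [Module R M]
    (a b I : Ideal R) : Prop :=
  I ≤ a ⊓ b ∧
  (∃ rs : List R, I = Ideal.ofList rs ∧ RingTheory.Sequence.IsRegular M rs) ∧
  a • (⊤ : Submodule R M) ≠ ⊤ ∧ b • (⊤ : Submodule R M) ≠ ⊤ ∧
  (I • ⊤ : Submodule R M).colonBy a = b • (⊤ : Submodule R M) ∧
  (I • ⊤ : Submodule R M).colonBy b = a • (⊤ : Submodule R M)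

open IsLocalRing

theorem Submodule.mem_colonBy {R M : Type*} [CommRing R] [AddCommGroup M] [Module R M]
    {N : Submodule R M} {a : Ideal R} {x : M} : x ∈ N.colonBy a ↔ ∀ r ∈ a, r • x ∈ N := by
  simp [Submodule.colonBy]

/-- An associated prime of an Artinian module over a Noetherian ring is maximal. -/
theorem IsAssociatedPrime.isMaximal_of_isArtinian {R N : Type*} [CommRing R] [IsNoetherianRing R]
    [AddCommGroup N] [Module R N] [IsArtinian R N] {p : Ideal R} (hp : IsAssociatedPrime p N) :
    p.IsMaximal := by
  obtain ⟨_, f, hf⟩ := (isAssociatedPrime_iff_exists_injective_linearMap _ _).mp hp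
  have : IsArtinianRing (R ⧸ p) := isArtinian_of_tower R (isArtinian_of_injective f hf)
  exact Ideal.Quotient.maximal_of_isField p (IsArtinianRing.isField_of_isDomain _)

/-- A finite module over a Noetherian ring is Artinian if its associated primes are maximal. -/
theorem isArtinian_of_forall_associatedPrimes_isMaximal {R N : Type*} [CommRing R]
    [IsNoetherianRing R] [AddCommGroup N] [Module R N] [Module.Finite R N]
    (h : ∀ p ∈ associatedPrimes R N, p.IsMaximal) : IsArtinian R N := by
  let J := Module.annihilator R N
  have : Ring.KrullDimLE 0 (R ⧸ J) :=
    Ideal.krullDimLE_zero_quotient_iff_forall_minimalPrimes_isMaximal.mpr fun p hp ↦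
      h p (Module.associatedPrimes.minimalPrimes_annihilator_subset_associatedPrimes R N hp)
  have : IsArtinianRing (R ⧸ J) := IsNoetherianRing.isArtinianRing_of_krullDimLE_zero
  let : Module (R ⧸ J) N := (Module.isTorsionBySet_annihilator R N).module
  have : IsScalarTower R (R ⧸ J) N := (Module.isTorsionBySet_annihilator R N).isScalarTower
  have : Module.Finite (R ⧸ J) N := .of_restrictScalars_finite R _ _
  exact isArtinian_of_surjective_algebraMap (R := R ⧸ J) Ideal.Quotient.mk_surjective

section

variable {R M : Type*} [CommRing R] [IsNoetherianRing R] [IsLocalRing R]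
  [AddCommGroup M] [Module R M]

theorem maximalIdeal_mem_associatedPrimes_quotient_iff {N : Submodule R M} :
    maximalIdeal R ∈ associatedPrimes R (M ⧸ N) ↔
      ∃ x ∉ N, ∀ r ∈ maximalIdeal R, r • x ∈ N := by
  rw [AssociatedPrimes.mem_iff, isAssociatedPrime_iff]
  constructor
  · rintro ⟨hp, y, hy⟩
    obtain ⟨x, rfl⟩ := N.mkQ_surjective y
    have key (r : R) : r ∈ maximalIdeal R ↔ r • x ∈ N := by
      rw [hy, Submodule.mem_colon_singleton, ← map_smul, Submodule.mem_bot, Submodule.mkQ_apply,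
        Submodule.Quotient.mk_eq_zero]
    refine ⟨x, fun hx ↦ hp.ne_top ((Ideal.eq_top_iff_one _).mpr ?_), fun r hr ↦ (key r).mp hr⟩
    rwa [key, one_smul]
  · rintro ⟨x, hx, h⟩
    have key (r : R) : r ∈ (⊥ : Submodule R (M ⧸ N)).colon {N.mkQ x} ↔ r • x ∈ N := by
      rw [Submodule.mem_colon_singleton, ← map_smul, Submodule.mem_bot, Submodule.mkQ_apply,
        Submodule.Quotient.mk_eq_zero]
    refine ⟨inferInstance, N.mkQ x, (maximalIdeal.isMaximal R).eq_of_le ?_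
      fun r hr ↦ (key r).mpr (h r hr)⟩
    rwa [Ne, Ideal.eq_top_iff_one, key, one_smul]

theorem exists_socle_of_isArtinian_quotient {N : Submodule R M} (hN : N ≠ ⊤)
    [IsArtinian R (M ⧸ N)] : ∃ x ∉ N, ∀ r ∈ maximalIdeal R, r • x ∈ N := by
  have := Submodule.Quotient.nontrivial_iff.mpr hN
  obtain ⟨p, hp⟩ := associatedPrimes.nonempty R (M ⧸ N)
  rw [← maximalIdeal_mem_associatedPrimes_quotient_iff,
    ← eq_maximalIdeal (IsAssociatedPrime.isMaximal_of_isArtinian hp)]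
  exact hp

/-- If the quotient by a proper submodule `N :_M b` is Artinian and the associated primes of
`M ⧸ N` are pairwise incomparable, then `M ⧸ N` is Artinian. -/
theorem isArtinian_quotient_of_isArtinian_quotient_colonBy [Module.Finite R M]
    {N : Submodule R M} {b : Ideal R} (hne : N.colonBy b ≠ ⊤)
    (hmin : ∀ p ∈ associatedPrimes R (M ⧸ N), ∀ q ∈ associatedPrimes R (M ⧸ N), q ≤ p → q = p)
    [IsArtinian R (M ⧸ N.colonBy b)] : IsArtinian R (M ⧸ N) := by
  obtain ⟨x, hx, hmx⟩ := exists_socle_of_isArtinian_quotient hne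
  simp only [Submodule.mem_colonBy, not_forall] at hx hmx
  obtain ⟨s, hs, hsx⟩ := hx
  have hm : maximalIdeal R ∈ associatedPrimes R (M ⧸ N) :=
    maximalIdeal_mem_associatedPrimes_quotient_iff.mpr
      ⟨s • x, hsx, fun r hr ↦ smul_comm r s x ▸ hmx r hr s hs⟩
  refine isArtinian_of_forall_associatedPrimes_isMaximal fun p hp ↦ ?_
  rw [hmin _ hm p hp (le_maximalIdeal hp.isPrime.ne_top)]
  exact maximalIdeal.isMaximal R

end

/-- Over a local ring, if `a` and `b` are linked by `I` over `M` and every associated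
prime of `M/IM` is minimal, then Artinianness of `M/IM`, `M/aM` and `M/bM` are
equivalent; moreover if they hold then `aM ∩ bM ≠ IM`. -/
theorem artinian_tfae_of_linked {R M : Type*} [CommRing R] [IsNoetherianRing R] [IsLocalRing R]
    [AddCommGroup M] [Module R M] [Module.Finite R M]
    (a b I : Ideal R) (h : Ideal.LinkedBy R M a b I)
    (hmin : ∀ p ∈ associatedPrimes R (M ⧸ (I • ⊤ : Submodule R M)),
      ∀ q ∈ associatedPrimes R (M ⧸ (I • ⊤ : Submodule R M)), q ≤ p → q = p) :
    (IsArtinian R (M ⧸ (I • ⊤ : Submodule R M)) ↔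
        IsArtinian R (M ⧸ (a • ⊤ : Submodule R M))) ∧
      (IsArtinian R (M ⧸ (a • ⊤ : Submodule R M)) ↔
        IsArtinian R (M ⧸ (b • ⊤ : Submodule R M))) ∧
      (IsArtinian R (M ⧸ (I • ⊤ : Submodule R M)) →
        (a • ⊤ : Submodule R M) ⊓ (b • ⊤ : Submodule R M) ≠ I • ⊤) := by
  obtain ⟨hI, -, ha, hb, hab, hba⟩ := h
  have hIa : I • (⊤ : Submodule R M) ≤ a • ⊤ := Submodule.smul_mono_left (hI.trans inf_le_left)
  have hIb : I • (⊤ : Submodule R M) ≤ b • ⊤ := Submodule.smul_mono_left (hI.trans inf_le_right)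
  have iffa : IsArtinian R (M ⧸ (I • ⊤ : Submodule R M)) ↔
      IsArtinian R (M ⧸ (a • ⊤ : Submodule R M)) := by
    refine ⟨fun _ ↦ isArtinian_of_surjective _ _ (Submodule.factor_surjective hIa), fun h ↦ ?_⟩
    rw [← hba] at ha h
    exact isArtinian_quotient_of_isArtinian_quotient_colonBy ha hmin
  have iffb : IsArtinian R (M ⧸ (I • ⊤ : Submodule R M)) ↔
      IsArtinian R (M ⧸ (b • ⊤ : Submodule R M)) := by
    refine ⟨fun _ ↦ isArtinian_of_surjective _ _ (Submodule.factor_surjective hIb), fun h ↦ ?_⟩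
    rw [← hab] at hb h
    exact isArtinian_quotient_of_isArtinian_quotient_colonBy hb hmin
  refine ⟨iffa, iffa.symm.trans iffb, fun _ heq ↦ ?_⟩
  obtain ⟨x, hx, hmx⟩ := exists_socle_of_isArtinian_quotient (ne_top_of_le_ne_top ha hIa)
  have ham : a ≤ maximalIdeal R := le_maximalIdeal fun h ↦ ha (by simp [h])
  have hbm : b ≤ maximalIdeal R := le_maximalIdeal fun h ↦ hb (by simp [h])
  rw [← heq, ← hab, ← hba] at hx
  exact hx ⟨Submodule.mem_colonBy.mpr fun r hr ↦ hmx r (hbm hr),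
    Submodule.mem_colonBy.mpr fun r hr ↦ hmx r (ham hr)⟩
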